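/- Define κ(s,x,t,y) = (4π)^{−1/2}(t−s+y−x)^{−3/2} if t > s and y > x, and 0 otherwise. Let 0 < p < 1/2, c > 0, and let q : ℝ² → [0,∞) be measurable with q(u,z) ≤ c·(u+z)^{−p} for u, z > 0 and q(u,z) = 0 if u ≤ 0 or z ≤ 0. For measurable g : ℝ² → [0,∞] let Kg(s,x) = ∫_{ℝ²} κ(s,x,u,z)·q(u,z)·g(u,z) dz du. Fix t, y ∈ ℝ with t + y > 0 and set f(s,x) = κ(s,x,t,y). Let h > 0 satisfy η := 2√2·c·[B(1/2−p, 1) + B(1/2, 1−p)]·h^{1/2−p} < 1, where B is the Euler beta function, let k ≥ 1 be the integer with (k−1)h ≤ t+y < kh, and for j = 0, …, k set a_j = (k−j)h, A_j = {(u,z) ∈ ℝ² : u + z ≥ a_j} for 1 ≤ j ≤ k−1, A₀ = ∅, A_k = ℝ², and S_j = A_j \ A_{j−1}. Then for every j = 1, …, k and every (s,x) ∈ S_j with s < t and x < y: Σ_{m=0}^∞ K^m f(s,x) ≤ (1/(1−η))^j · κ(s,x,t,y). -/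

import Mathlib

open MeasureTheory
open scoped ENNReal NNReal

/-- The potential kernel of two independent 1/2-stable subordinators (as an `ℝ≥0∞`-valued
kernel): `κ(s,x,t,y) = (4π)^{−1/2}(t−s+y−x)^{−3/2}` if `t > s` and `y > x`, else `0`. -/
noncomputable def kappaKerE (s x t y : ℝ) : ℝ≥0∞ :=
  if s < t ∧ x < y then
    ENNReal.ofReal ((4 * Real.pi) ^ (-(1:ℝ)/2) * (t - s + y - x) ^ (-(3:ℝ)/2))
  else 0

/-- The operator `Kg(s,x) = ∫_{ℝ²} κ(s,x,u,z) q(u,z) g(u,z) dz du`. -/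
noncomputable def kappaOp (q : ℝ × ℝ → ℝ) (g : ℝ × ℝ → ℝ≥0∞) : ℝ × ℝ → ℝ≥0∞ :=
  fun sx => ∫⁻ w : ℝ × ℝ, kappaKerE sx.1 sx.2 w.1 w.2 * ENNReal.ofReal (q w) * g w

/-- The Euler beta function `B(a,b) = ∫_0^1 v^{a−1}(1−v)^{b−1} dv`. -/
noncomputable def eulerBeta (a b : ℝ) : ℝ :=
  ∫ v in (0:ℝ)..1, v ^ (a - 1) * (1 - v) ^ (b - 1)

lemma beta_ii (a b : ℝ) (ha : 0 < a) (hb : 0 < b) :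
    IntervalIntegrable (fun v : ℝ => v ^ (a - 1) * (1 - v) ^ (b - 1)) volume 0 1 := by
  have h := (Complex.betaIntegral_convergent (u := (a:ℂ)) (v := (b:ℂ)) (by simpa) (by simpa)).norm
  refine h.congr_uIoo ?_
  intro x hx
  rw [Set.uIoo_of_le zero_le_one] at hx
  have h1 : 0 < 1 - x := by linarith [hx.2]
  simp only [norm_mul]
  have e2 : (1 - (x:ℂ)) = ((1 - x : ℝ) : ℂ) := by push_cast; rfl
  rw [e2, Complex.norm_cpow_eq_rpow_re_of_pos hx.1, Complex.norm_cpow_eq_rpow_re_of_pos h1]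
  simp

lemma beta_symm (a b : ℝ) : eulerBeta a b = eulerBeta b a := by
  unfold eulerBeta
  have := intervalIntegral.integral_comp_sub_left (a := 0) (b := 1)
    (fun v : ℝ => v ^ (b - 1) * (1 - v) ^ (a - 1)) 1
  simp only [sub_self, sub_zero, sub_sub_cancel] at this
  rw [← this]
  congr 1; ext v; ring

lemma beta_nonneg (a b : ℝ) : 0 ≤ eulerBeta a b := by
  unfold eulerBeta
  apply intervalIntegral.integral_nonneg zero_le_one
  intro u hu
  exact mul_nonneg (Real.rpow_nonneg hu.1 _) (Real.rpow_nonneg (by linarith [hu.2]) _)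

lemma beta_scaled (a b α β : ℝ) (ha : 0 < a) (hb : 0 < b) (h : α < β) :
    ∫⁻ v in Set.Ioo α β, ENNReal.ofReal ((v - α) ^ (a - 1) * (β - v) ^ (b - 1))
      = ENNReal.ofReal ((β - α) ^ (a + b - 1) * eulerBeta a b) := by
  have hL : 0 < β - α := by linarith
  set L := β - α with hLdef
  have hii := beta_ii a b ha hb
  set f := fun v : ℝ => v ^ (a - 1) * (1 - v) ^ (b - 1) with hf
  have hg : IntervalIntegrable (fun v => f (L⁻¹ * v - α / L)) volume α β := by
    have h1 := (hii.comp_sub_right (α / L)).comp_mul_left (c := L⁻¹)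
    convert h1 using 1
    · field_simp; ring
    · field_simp; rw [hLdef]; ring
  have hint : ∫ v in α..β, f (L⁻¹ * v - α / L) = L * eulerBeta a b := by
    rw [intervalIntegral.integral_comp_mul_sub f (inv_ne_zero hL.ne')]
    have e1 : L⁻¹ * α - α / L = 0 := by field_simp; ring
    have e2 : L⁻¹ * β - α / L = 1 := by field_simp; rw [hLdef]
    rw [e1, e2, inv_inv]; rfl
  have heq : Set.EqOn (fun v => L ^ (a + b - 2) * f (L⁻¹ * v - α / L))
      (fun v => (v - α) ^ (a - 1) * (β - v) ^ (b - 1)) (Set.Ioo α β) := by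
    intro v hv
    have h1 : 0 < v - α := by linarith [hv.1]
    have h2 : 0 < β - v := by linarith [hv.2]
    simp only [hf]
    have e1 : L⁻¹ * v - α / L = (v - α) / L := by field_simp
    have e2 : 1 - (v - α) / L = (β - v) / L := by field_simp; rw [hLdef]; ring
    rw [e1, e2, Real.div_rpow h1.le hL.le, Real.div_rpow h2.le hL.le,
      show a + b - 2 = (a - 1) + (b - 1) by ring, Real.rpow_add hL]
    have := (Real.rpow_pos_of_pos hL (a-1)).ne'
    have := (Real.rpow_pos_of_pos hL (b-1)).ne'
    field_simp
  have hgi : IntegrableOn (fun v => (v - α) ^ (a - 1) * (β - v) ^ (b - 1)) (Set.Ioo α β) := by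
    refine IntegrableOn.congr_fun ?_ heq measurableSet_Ioo
    exact (((intervalIntegrable_iff_integrableOn_Ioo_of_le h.le).1 hg).const_mul _)
  rw [← ofReal_integral_eq_lintegral_ofReal hgi]
  · rw [← setIntegral_congr_fun measurableSet_Ioo heq, ← integral_Ioc_eq_integral_Ioo,
      ← intervalIntegral.integral_of_le h.le, intervalIntegral.integral_const_mul, hint, ← mul_assoc]
    congr 2
    rw [show a + b - 1 = (a + b - 2) + 1 by ring, Real.rpow_add hL, Real.rpow_one]
  · refine (ae_restrict_iff' measurableSet_Ioo).2 (Filter.Eventually.of_forall ?_)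
    intro v hv
    exact mul_nonneg (Real.rpow_nonneg (by linarith [hv.1]) _) (Real.rpow_nonneg (by linarith [hv.2]) _)

lemma shear (F : ℝ × ℝ → ℝ≥0∞) (hF : Measurable F) :
    ∫⁻ w, F w = ∫⁻ v, ∫⁻ u, F (u, v - u) := by
  have hm : AEMeasurable (Function.uncurry fun v u : ℝ => F (u, v - u)) (volume.prod volume) :=
    (hF.comp (by fun_prop : Measurable fun z : ℝ × ℝ => (z.2, z.1 - z.2))).aemeasurable
  rw [Measure.volume_eq_prod, lintegral_prod _ hF.aemeasurable, lintegral_lintegral_swap hm]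
  apply lintegral_congr
  intro u
  rw [lintegral_sub_right_eq_self (fun z => F (u, z)) u]

lemma kappa_le (s x u z t y : ℝ) (h1 : s < u) (h2 : x < z) (h3 : u < t) (h4 : z < y)
    (r : ℝ) (hr0 : 0 ≤ r) (R : ℝ) (hr : r ≤ R) :
    kappaKerE s x u z * ENNReal.ofReal r * kappaKerE u z t y ≤
      kappaKerE s x t y * ENNReal.ofReal (2 * Real.sqrt 2 * R *
        (min (u + z - (s + x)) (t + y - (u + z))) ^ (-(3:ℝ)/2)) := by
  unfold kappaKerE
  rw [if_pos ⟨h1, h2⟩, if_pos ⟨h3, h4⟩, if_pos ⟨h1.trans h3, h2.trans h4⟩]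
  set D := (4 * Real.pi) ^ (-(1:ℝ)/2) with hD
  have hD0 : 0 < D := by positivity
  have hD1 : D ≤ 1 := Real.rpow_le_one_of_one_le_of_nonpos (by nlinarith [Real.pi_gt_three]) (by norm_num)
  set A := u - s + z - x with hA
  set B := t - u + y - z with hB
  have hA0 : 0 < A := by linarith
  have hB0 : 0 < B := by linarith
  rw [show u + z - (s + x) = A by rw [hA]; ring, show t + y - (u + z) = B by rw [hB]; ring,
    show t - s + y - x = A + B by rw [hA, hB]; ring]
  rw [← ENNReal.ofReal_mul (by positivity), ← ENNReal.ofReal_mul (by positivity),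
    ← ENNReal.ofReal_mul (by positivity)]
  apply ENNReal.ofReal_le_ofReal
  have e : A * B = min A B * max A B := (min_mul_max A B).symm
  have hm : 0 < min A B := lt_min hA0 hB0
  have hM : 0 < max A B := lt_max_of_lt_left hA0
  have hMle : (A + B) / 2 ≤ max A B := by
    rcases le_total A B with h | h
    · rw [max_eq_right h]; linarith
    · rw [max_eq_left h]; linarith
  have s2 : (2:ℝ) ^ ((3:ℝ)/2) = 2 * Real.sqrt 2 := by
    rw [Real.sqrt_eq_rpow, show (3:ℝ)/2 = 1 + 1/2 by norm_num, Real.rpow_add two_pos, Real.rpow_one]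
  have hkey : A ^ (-(3:ℝ)/2) * B ^ (-(3:ℝ)/2) ≤
      (2 * Real.sqrt 2 * (A + B) ^ (-(3:ℝ)/2)) * (min A B) ^ (-(3:ℝ)/2) := by
    rw [← Real.mul_rpow hA0.le hB0.le, e, Real.mul_rpow hm.le hM.le, mul_comm]
    apply mul_le_mul_of_nonneg_right _ (by positivity)
    calc (max A B) ^ (-(3:ℝ)/2) ≤ ((A + B) / 2) ^ (-(3:ℝ)/2) :=
          Real.rpow_le_rpow_of_nonpos (by positivity) hMle (by norm_num)
      _ = _ := by
          rw [Real.div_rpow (by positivity) (by norm_num), ← s2,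
            show -(3:ℝ)/2 = -(3/2) by norm_num, Real.rpow_neg two_pos.le (3/2)]
          field_simp
  have hR0 : 0 ≤ R := hr0.trans hr
  calc D * A ^ (-(3:ℝ)/2) * r * (D * B ^ (-(3:ℝ)/2))
      = D * (A ^ (-(3:ℝ)/2) * B ^ (-(3:ℝ)/2)) * (D * r) := by ring
    _ ≤ D * ((2 * Real.sqrt 2 * (A + B) ^ (-(3:ℝ)/2)) * (min A B) ^ (-(3:ℝ)/2)) * (1 * R) := by
        gcongr
    _ = _ := by ring

lemma kappa_meas1 (s x : ℝ) : Measurable fun w : ℝ × ℝ => kappaKerE s x w.1 w.2 := by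
  unfold kappaKerE
  refine Measurable.ite ?_ (by fun_prop) (by fun_prop)
  exact (measurableSet_lt measurable_const measurable_fst).inter
    (measurableSet_lt measurable_const measurable_snd)

lemma kappa_meas2 (t y : ℝ) : Measurable fun w : ℝ × ℝ => kappaKerE w.1 w.2 t y := by
  unfold kappaKerE
  refine Measurable.ite ?_ (by fun_prop) (by fun_prop)
  exact (measurableSet_lt measurable_fst measurable_const).inter
    (measurableSet_lt measurable_snd measurable_const)

lemma kappa_ne {s x t y : ℝ} (h : kappaKerE s x t y ≠ 0) : s < t ∧ x < y := by
  by_contra hn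
  exact h (by unfold kappaKerE; rw [if_neg hn])

lemma strip (p c : ℝ) (hp0 : 0 < p) (hp1 : p < 1/2) (hc : 0 < c)
    (q : ℝ × ℝ → ℝ) (hqmeas : Measurable q) (hq0 : ∀ w, 0 ≤ q w)
    (hqbd : ∀ u z : ℝ, 0 < u → 0 < z → q (u, z) ≤ c * (u + z) ^ (-p))
    (hqvan : ∀ u z : ℝ, u ≤ 0 ∨ z ≤ 0 → q (u, z) = 0)
    (t y : ℝ) (h : ℝ) (hh : 0 < h)
    (S : Set (ℝ × ℝ)) (hS : MeasurableSet S) (α₀ : ℝ) (hα₀ : 0 ≤ α₀)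
    (hSb : ∀ u z, (u, z) ∈ S → 0 < u → 0 < z → u < t → z < y → α₀ ≤ u + z ∧ u + z ≤ α₀ + h)
    (s x : ℝ) :
    ∫⁻ w in S, kappaKerE s x w.1 w.2 * ENNReal.ofReal (q w) * kappaKerE w.1 w.2 t y
      ≤ ENNReal.ofReal (2 * Real.sqrt 2 * c * (eulerBeta (1/2 - p) 1 + eulerBeta (1/2) (1 - p))
        * h ^ (1/2 - p)) * kappaKerE s x t y := by
  rw [← lintegral_indicator hS]
  set F := S.indicator (fun w : ℝ × ℝ =>
    kappaKerE s x w.1 w.2 * ENNReal.ofReal (q w) * kappaKerE w.1 w.2 t y) with hF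
  have hFm : Measurable F :=
    (((kappa_meas1 s x).mul hqmeas.ennreal_ofReal).mul (kappa_meas2 t y)).indicator hS
  set α := max (s + x) α₀ with hα
  set β := min (t + y) (α₀ + h) with hβ
  have hFne : ∀ u z, F (u, z) ≠ 0 → (s < u ∧ x < z ∧ u < t ∧ z < y) ∧ 0 < u ∧ 0 < z ∧
      u + z ∈ Set.Icc α β := by
    intro u z hne
    have hmem : (u, z) ∈ S := Set.mem_of_indicator_ne_zero hne
    rw [hF, Set.indicator_of_mem hmem] at hne
    have h3 := right_ne_zero_of_mul hne
    have h12 := left_ne_zero_of_mul hne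
    have k1 := kappa_ne (left_ne_zero_of_mul h12)
    have k2 := kappa_ne h3
    have hq := right_ne_zero_of_mul h12
    simp only at k1 k2
    have huz : 0 < u ∧ 0 < z := by
      by_contra hcon
      apply hq
      rw [hqvan u z (by by_contra h'; push Not at h'; exact hcon h')]
      simp
    have := hSb u z hmem huz.1 huz.2 k2.1 k2.2
    refine ⟨⟨k1.1, k1.2, k2.1, k2.2⟩, huz.1, huz.2, ?_, ?_⟩
    · exact max_le (by linarith) this.1
    · exact le_min (by linarith) this.2
  have hle : ∀ u z, F (u, z) ≤ kappaKerE s x u z * ENNReal.ofReal (q (u, z)) * kappaKerE u z t y :=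
    fun u z => Set.indicator_le_self' (fun _ _ => zero_le) (u, z)
  rw [shear F hFm]
  -- restrict to the interval
  have hout : ∀ v, v ∉ Set.Icc α β → ∫⁻ u, F (u, v - u) = 0 := by
    intro v hv
    rw [← lintegral_zero (μ := (volume : Measure ℝ))]
    apply lintegral_congr
    intro u
    by_contra hne
    have := (hFne u (v - u) hne).2.2.2
    rw [add_sub_cancel] at this
    exact hv this
  have e1 : ∫⁻ v, ∫⁻ u, F (u, v - u) = ∫⁻ v in Set.Ioo α β, ∫⁻ u, F (u, v - u) := by
    rw [setLIntegral_congr Ioo_ae_eq_Icc, ← lintegral_indicator measurableSet_Icc]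
    apply lintegral_congr
    intro v
    by_cases hv : v ∈ Set.Icc α β
    · rw [Set.indicator_of_mem hv]
    · rw [Set.indicator_of_notMem hv, hout v hv]
  rw [e1]
  rcases le_or_gt β α with hba | hab
  · rw [Set.Ioo_eq_empty (not_lt.2 hba)]; simp
  have hα0 : 0 ≤ α := hα₀.trans (le_max_right _ _)
  have hbound : ∀ v ∈ Set.Ioo α β, ∫⁻ u, F (u, v - u) ≤
      (kappaKerE s x t y * ENNReal.ofReal (2 * Real.sqrt 2 * c)) *
      (ENNReal.ofReal ((v - α) ^ ((1/2 - p) - 1) * (β - v) ^ ((1:ℝ) - 1)) +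
       ENNReal.ofReal ((v - α) ^ ((1 - p) - 1) * (β - v) ^ ((1/2:ℝ) - 1))) := by
    intro v hv
    have hva : 0 < v - α := by linarith [hv.1]
    have hbv : 0 < β - v := by linarith [hv.2]
    have hv0 : 0 < v := by linarith
    have ha1 : v - α ≤ v - (s + x) := by linarith [le_max_left (s + x) α₀]
    have hb1 : β - v ≤ t + y - v := by linarith [min_le_left (t + y) (α₀ + h)]
    set m := min (v - (s + x)) (t + y - v) with hm
    have hm0 : 0 < m := lt_min (by linarith) (by linarith)
    set E := kappaKerE s x t y * ENNReal.ofReal (2 * Real.sqrt 2 * (c * v ^ (-p)) * m ^ (-(3:ℝ)/2))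
    set J := Set.Ioo (max s (v - y)) (min t (v - x))
    have hFE : ∀ u, F (u, v - u) ≤ J.indicator (fun _ => E) u := by
      intro u
      by_cases hne : F (u, v - u) = 0
      · rw [hne]; exact zero_le
      obtain ⟨⟨g1, g2, g3, g4⟩, g5, g6, g7⟩ := hFne _ _ hne
      have hu : u ∈ J := ⟨max_lt g1 (by linarith), lt_min g3 (by linarith)⟩
      rw [Set.indicator_of_mem hu]
      refine (hle _ _).trans ?_
      have := kappa_le s x u (v - u) t y g1 g2 g3 g4 (q (u, v - u)) (hq0 _) (c * v ^ (-p))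
        (by have := hqbd u (v - u) g5 g6; rwa [add_sub_cancel] at this)
      rwa [add_sub_cancel] at this
    have hJ : volume J ≤ ENNReal.ofReal m := by
      rw [Real.volume_Ioo]
      apply ENNReal.ofReal_le_ofReal
      apply le_min
      · linarith [min_le_right t (v - x), le_max_left s (v - y)]
      · linarith [min_le_left t (v - x), le_max_right s (v - y)]
    calc ∫⁻ u, F (u, v - u) ≤ ∫⁻ u, J.indicator (fun _ => E) u := lintegral_mono hFE
      _ = E * volume J := by rw [lintegral_indicator_const measurableSet_Ioo]
      _ ≤ E * ENNReal.ofReal m := by gcongr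
      _ ≤ _ := by
        rw [mul_assoc (kappaKerE s x t y), mul_assoc (kappaKerE s x t y)]
        refine mul_le_mul_right ?_ _
        rw [← ENNReal.ofReal_add (by positivity) (by positivity), ← ENNReal.ofReal_mul (by positivity),
          ← ENNReal.ofReal_mul (by positivity)]
        apply ENNReal.ofReal_le_ofReal
        have em : m ^ (-(3:ℝ)/2) * m = m ^ (-(1:ℝ)/2) := by
          nth_rewrite 2 [← Real.rpow_one m]
          rw [← Real.rpow_add hm0]; norm_num
        have hm2 : m ^ (-(1:ℝ)/2) ≤ (v - α) ^ (-(1:ℝ)/2) + (β - v) ^ (-(1:ℝ)/2) := by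
          have p1 : 0 < (v - α) ^ (-(1:ℝ)/2) := by positivity
          have p2 : 0 < (β - v) ^ (-(1:ℝ)/2) := by positivity
          rcases min_choice (v - (s + x)) (t + y - v) with hc | hc
          · rw [hm, hc]
            have := Real.rpow_le_rpow_of_nonpos hva ha1 (by norm_num : (-(1:ℝ)/2) ≤ 0)
            linarith
          · rw [hm, hc]
            have := Real.rpow_le_rpow_of_nonpos hbv hb1 (by norm_num : (-(1:ℝ)/2) ≤ 0)
            linarith
        have hvp : v ^ (-p) ≤ (v - α) ^ (-p) :=
          Real.rpow_le_rpow_of_nonpos hva (by linarith) (by linarith)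
        have ee : (v - α) ^ ((1/2 - p) - 1) = (v - α) ^ (-p) * (v - α) ^ (-(1:ℝ)/2) := by
          rw [← Real.rpow_add hva]; congr 1; ring
        rw [ee, sub_self, Real.rpow_zero, mul_one, show (1 - p) - 1 = -p by ring,
          show (1/2:ℝ) - 1 = -(1:ℝ)/2 by norm_num]
        calc 2 * Real.sqrt 2 * (c * v ^ (-p)) * m ^ (-(3:ℝ)/2) * m
            = 2 * Real.sqrt 2 * c * (v ^ (-p) * (m ^ (-(3:ℝ)/2) * m)) := by ring
          _ ≤ 2 * Real.sqrt 2 * c * ((v - α) ^ (-p) *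
              ((v - α) ^ (-(1:ℝ)/2) + (β - v) ^ (-(1:ℝ)/2))) := by
              rw [em]; gcongr
          _ = _ := by ring
  refine (setLIntegral_mono' measurableSet_Ioo hbound).trans ?_
  rw [lintegral_const_mul _ (by fun_prop), lintegral_add_left (by fun_prop),
    beta_scaled _ _ _ _ (by linarith) (by norm_num) hab,
    beta_scaled _ _ _ _ (by linarith) (by norm_num) hab, mul_comm, mul_comm (kappaKerE s x t y),
    ← mul_assoc]
  gcongr
  have hL : 0 < β - α := by linarith
  have b1 := beta_nonneg (1/2 - p) 1
  have b2 := beta_nonneg (1/2) (1 - p)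
  rw [beta_symm (1 - p) (1/2), ← ENNReal.ofReal_add (by positivity) (by positivity),
    ← ENNReal.ofReal_mul (by positivity)]
  apply ENNReal.ofReal_le_ofReal
  have hLh : β - α ≤ h := by linarith [le_max_right (s + x) α₀, min_le_right (t + y) (α₀ + h)]
  have hpow : (β - α) ^ (1/2 - p) ≤ h ^ (1/2 - p) :=
    Real.rpow_le_rpow hL.le hLh (by linarith)
  rw [show 1/2 - p + 1 - 1 = 1/2 - p by ring, show 1 - p + 1/2 - 1 = 1/2 - p by ring]
  calc _ = 2 * Real.sqrt 2 * c * (eulerBeta (1/2 - p) 1 + eulerBeta (1/2) (1 - p))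
        * (β - α) ^ (1/2 - p) := by ring
    _ ≤ _ := by gcongr

lemma kop_sum (q : ℝ × ℝ → ℝ) (f : ℝ × ℝ → ℝ≥0∞) (N : ℕ) (w : ℝ × ℝ) :
    ∑ m ∈ Finset.range N, (kappaOp q)^[m + 1] f w ≤
      kappaOp q (fun v => ∑ m ∈ Finset.range N, (kappaOp q)^[m] f v) w := by
  induction N with
  | zero => simp
  | succ n ih =>
    rw [Finset.sum_range_succ, Function.iterate_succ_apply']
    refine (add_le_add ih le_rfl).trans ?_
    unfold kappaOp
    refine (le_lintegral_add _ _).trans (lintegral_mono fun v => ?_)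
    simp only [Finset.sum_range_succ]
    rw [← mul_add]

/-- Estimate for the Schrödinger perturbation series of the potential kernel `κ` of two
independent 1/2-stable subordinators by `q ≤ c(u+z)^{−p}`: on each slice
`S_j = A_j \ A_{j−1}` determined by the level lines `u + z = (k−j)h`,
`Σ_m K^m f ≤ (1/(1−η))^j κ(s,x,t,y)`, where `f(s,x) = κ(s,x,t,y)` and
`η = 2√2 c [B(1/2−p,1) + B(1/2,1−p)] h^{1/2−p} < 1`. -/
theorem stmt_19 (p c : ℝ) (hp0 : 0 < p) (hp1 : p < 1/2) (hc : 0 < c)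
    (q : ℝ × ℝ → ℝ) (hqmeas : Measurable q) (hq0 : ∀ w, 0 ≤ q w)
    (hqbd : ∀ u z : ℝ, 0 < u → 0 < z → q (u, z) ≤ c * (u + z) ^ (-p))
    (hqvan : ∀ u z : ℝ, u ≤ 0 ∨ z ≤ 0 → q (u, z) = 0)
    (t y : ℝ) (hty : 0 < t + y)
    (h : ℝ) (hh : 0 < h)
    (η : ℝ)
    (hηdef : η = 2 * Real.sqrt 2 * c * (eulerBeta (1/2 - p) 1 + eulerBeta (1/2) (1 - p))
        * h ^ (1/2 - p))
    (hη : η < 1)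
    (k : ℕ) (hk : 1 ≤ k) (hk1 : ((k:ℝ) - 1) * h ≤ t + y) (hk2 : t + y < (k:ℝ) * h)
    (A : ℕ → Set (ℝ × ℝ))
    (hA : ∀ j, A j = if j = 0 then ∅ else if j = k then Set.univ
        else {w : ℝ × ℝ | ((k:ℝ) - j) * h ≤ w.1 + w.2}) :
    ∀ j, 1 ≤ j → j ≤ k → ∀ s x : ℝ, (s, x) ∈ A j \ A (j - 1) → s < t → x < y →
      ∑' m : ℕ, (kappaOp q)^[m] (fun w => kappaKerE w.1 w.2 t y) (s, x)
        ≤ ENNReal.ofReal ((1 / (1 - η)) ^ j) * kappaKerE s x t y := by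
  have hη0 : 0 ≤ η := by
    have b1 := beta_nonneg (1/2 - p) 1
    have b2 := beta_nonneg (1/2) (1 - p)
    rw [hηdef]; positivity
  have hAm : ∀ j, MeasurableSet (A j) := by
    intro j
    rw [hA]
    split_ifs
    · exact MeasurableSet.empty
    · exact MeasurableSet.univ
    · exact measurableSet_le (by fun_prop) (by fun_prop)
  have hup : ∀ j, ∀ s x u z, (s, x) ∈ A j → s < u → x < z → (u, z) ∈ A j := by
    intro j s x u z
    rw [hA]
    split_ifs
    · simp
    · simp
    · simp only [Set.mem_setOf_eq]; intro h1 h2 h3; linarith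
  have hsub : ∀ i, i + 1 ≤ k → A (i + 1) ⊆ A i ∪ (A (i + 1) \ A i) := by
    intro i _ w hw
    by_cases h' : w ∈ A i
    · exact Or.inl h'
    · exact Or.inr ⟨hw, h'⟩
  set f := fun w : ℝ × ℝ => kappaKerE w.1 w.2 t y with hf
  have hkey : ∀ i, i + 1 ≤ k → ∀ s x,
      ∫⁻ w in A (i + 1) \ A i, kappaKerE s x w.1 w.2 * ENNReal.ofReal (q w) * f w
        ≤ ENNReal.ofReal η * f (s, x) := by
    intro i hi s x
    have hik : ((i:ℝ) + 1) ≤ k := by exact_mod_cast hi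
    rw [hηdef]
    refine strip p c hp0 hp1 hc q hqmeas hq0 hqbd hqvan t y h hh _ ((hAm _).diff (hAm _))
      (((k:ℝ) - (i + 1)) * h) (mul_nonneg (by linarith) hh.le) ?_ s x
    intro u z hm hu hz hut hzy
    obtain ⟨m1, m2⟩ := hm
    rw [hA] at m1 m2
    constructor
    · rw [if_neg (Nat.succ_ne_zero i)] at m1
      split_ifs at m1 with hk'
      · have : (k:ℝ) = i + 1 := by rw [← hk']; push_cast; rfl
        rw [this]; simp; linarith
      · simpa using m1
    · rw [show ((k:ℝ) - (i + 1)) * h + h = ((k:ℝ) - i) * h by ring]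
      split_ifs at m2 with h0 h1
      · subst h0; simp; linarith
      · simp at m2
      · simp only [Set.mem_setOf_eq, not_le] at m2; exact m2.le
  set G := fun (N : ℕ) (w : ℝ × ℝ) => ∑ m ∈ Finset.range N, (kappaOp q)^[m] f w with hG
  set C := fun j : ℕ => ENNReal.ofReal ((1 / (1 - η)) ^ j) with hC
  have hCstep : ∀ i, C i + ENNReal.ofReal η * C (i + 1) = C (i + 1) := by
    intro i
    have h1 : 0 < 1 - η := by linarith
    simp only [hC]
    rw [← ENNReal.ofReal_mul hη0, ← ENNReal.ofReal_add (by positivity) (by positivity)]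
    congr 1
    rw [pow_succ]; field_simp; ring
  have hGsucc : ∀ j N s x, (s, x) ∈ A j → G (N + 1) (s, x) ≤ f (s, x) +
      ∫⁻ w in A j, kappaKerE s x w.1 w.2 * ENNReal.ofReal (q w) * G N w := by
    intro j N s x hm
    simp only [hG]
    rw [Finset.sum_range_succ', add_comm]
    refine add_le_add le_rfl ((kop_sum q f N (s, x)).trans ?_)
    unfold kappaOp
    rw [← lintegral_indicator (hAm j)]
    refine lintegral_mono fun w => ?_
    by_cases hw : w ∈ A j
    · rw [Set.indicator_of_mem hw]
    · have : kappaKerE s x w.1 w.2 = 0 := by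
        by_contra hne
        have := kappa_ne hne
        exact hw (hup j s x w.1 w.2 hm this.1 this.2)
      simp [this]
  have hmain : ∀ i, i ≤ k → (∀ N s x, f (s, x) +
      ∫⁻ w in A i, kappaKerE s x w.1 w.2 * ENNReal.ofReal (q w) * G N w ≤ C i * f (s, x)) ∧
      ∀ N, ∀ w ∈ A i, G N w ≤ C i * f w := by
    intro i
    induction i with
    | zero =>
      intro _
      have h0 : A 0 = ∅ := by rw [hA]; simp
      rw [h0]
      simp [hC]
    | succ i ih =>
      intro hi
      obtain ⟨ih1, -⟩ := ih (by omega)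
      have step : ∀ N, (∀ w ∈ A (i + 1), G N w ≤ C (i + 1) * f w) → ∀ s x, f (s, x) +
          ∫⁻ w in A (i + 1), kappaKerE s x w.1 w.2 * ENNReal.ofReal (q w) * G N w
            ≤ C (i + 1) * f (s, x) := by
        intro N hN s x
        have hS : ∫⁻ w in A (i + 1) \ A i, kappaKerE s x w.1 w.2 * ENNReal.ofReal (q w) * G N w
            ≤ C (i + 1) * (ENNReal.ofReal η * f (s, x)) := by
          refine le_trans ?_ (mul_le_mul_right (hkey i hi s x) _)
          rw [← lintegral_const_mul' _ _ (by simp [hC])]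
          refine setLIntegral_mono' ((hAm _).diff (hAm _)) fun w hw => ?_
          refine (mul_le_mul_right (hN w hw.1) _).trans (le_of_eq (by ring))
        calc _ ≤ f (s, x) +
              ((∫⁻ w in A i, kappaKerE s x w.1 w.2 * ENNReal.ofReal (q w) * G N w) +
              ∫⁻ w in A (i + 1) \ A i, kappaKerE s x w.1 w.2 * ENNReal.ofReal (q w) * G N w) := by
              gcongr
              exact (lintegral_mono_set (hsub i hi)).trans (lintegral_union_le _ _ _)
          _ ≤ C i * f (s, x) + C (i + 1) * (ENNReal.ofReal η * f (s, x)) := by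
              rw [← add_assoc]
              exact add_le_add (ih1 N s x) hS
          _ = (C i + ENNReal.ofReal η * C (i + 1)) * f (s, x) := by ring
          _ = _ := by rw [hCstep]
      have hall : ∀ N, ∀ w ∈ A (i + 1), G N w ≤ C (i + 1) * f w := by
        intro N
        induction N with
        | zero => intro w _; simp [hG]
        | succ N ihN =>
          rintro ⟨s, x⟩ hw
          exact (hGsucc _ N s x hw).trans (step N ihN s x)
      exact ⟨fun N => step N (hall N), hall⟩
  intro j _ hj s x hmem _ _
  rw [ENNReal.tsum_eq_iSup_nat]
  exact iSup_le fun N => (hmain j hj).2 N (s, x) hmem.1
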